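/- If G is absolutely continuous on [A,B] and F̂ is the least concave majorant of G, then the Dirichlet energy of F̂ is at most that of G: ∫_A^B (F̂'(τ))² dτ ≤ ∫_A^B (G'(τ))² dτ. -/

import Mathlib

open MeasureTheory intervalIntegral Set

open scoped ENNReal

/-
The derivative of the majorant `F` is the conditional expectation of `g` given `F'`. Indeed, `F'`
is antitone, so up to a null set `{F' > c}` is an initial segment `[A, x]`. Its end point `x` is a
limit of points where a line of slope `> c` touches `F` from above; such a line touches `F` where
it touches `G`, so `F x = G x`. Since also `F A = G A`, the functions `F'` and `g` have the same
integral over `{F' > c}`. These sets form a π-system generating `σ(F')`, and conditional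
expectation contracts every `Lᵖ` norm.
-/

section ConditionalExpectation

variable {Ω : Type*} {m₀ : MeasurableSpace Ω} {μ : Measure Ω}

theorem setIntegral_eq_of_isPiSystem {E : Type*} [NormedAddCommGroup E] [NormedSpace ℝ E]
    {m : MeasurableSpace Ω} {f g : Ω → E} {C : Set (Set Ω)} (hm : m ≤ m₀)
    (hmC : m = MeasurableSpace.generateFrom C) (hC : IsPiSystem C)
    (hf : Integrable f μ) (hg : Integrable g μ) (huniv : ∫ x, f x ∂μ = ∫ x, g x ∂μ)
    (hfg : ∀ s ∈ C, ∫ x in s, f x ∂μ = ∫ x in s, g x ∂μ) {s : Set Ω} (hs : MeasurableSet[m] s) :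
    ∫ x in s, f x ∂μ = ∫ x in s, g x ∂μ := by
  induction s, hs using MeasurableSpace.induction_on_inter hmC hC with
  | empty => simp only [setIntegral_empty]
  | basic s hs => exact hfg s hs
  | compl s hs ih => rw [setIntegral_compl (hm s hs) hf, setIntegral_compl (hm s hs) hg, huniv, ih]
  | iUnion s hdisj hs ih =>
    rw [integral_iUnion (fun i => hm _ (hs i)) hdisj hf.integrableOn,
      integral_iUnion (fun i => hm _ (hs i)) hdisj hg.integrableOn]
    exact tsum_congr ih

theorem ae_eq_condExp_comap_of_setIntegral_preimage_Ioi_eq [IsFiniteMeasure μ] {f g : Ω → ℝ}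
    (hfm : Measurable f) (hf : Integrable f μ) (hg : Integrable g μ)
    (huniv : ∫ x, f x ∂μ = ∫ x, g x ∂μ)
    (hfg : ∀ c, ∫ x in f ⁻¹' Ioi c, f x ∂μ = ∫ x in f ⁻¹' Ioi c, g x ∂μ) :
    f =ᵐ[μ] μ[g | MeasurableSpace.comap f (borel ℝ)] := by
  have hm : MeasurableSpace.comap f (borel ℝ) ≤ m₀ :=
    BorelSpace.measurable_eq (α := ℝ) ▸ hfm.comap_le
  have hgen : MeasurableSpace.comap f (borel ℝ) =
      MeasurableSpace.generateFrom (preimage f '' range Ioi) := by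
    rw [borel_eq_generateFrom_Ioi, MeasurableSpace.comap_generateFrom]
  refine ae_eq_condExp_of_forall_setIntegral_eq hm hg (fun _ _ _ => hf.integrableOn)
    (fun s hs _ => setIntegral_eq_of_isPiSystem hm hgen ?_ hf hg huniv ?_ hs) ?_
  · exact isPiSystem_Ioi.comap f
  · rintro _ ⟨_, ⟨c, rfl⟩, rfl⟩
    exact hfg c
  · rw [← BorelSpace.measurable_eq (α := ℝ)]
    exact (comap_measurable f).stronglyMeasurable.aestronglyMeasurable

theorem integral_sq_le_integral_sq_of_eLpNorm_two_le {f g : Ω → ℝ} (hf : AEStronglyMeasurable f μ)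
    (hg : MemLp g 2 μ) (hfg : eLpNorm f 2 μ ≤ eLpNorm g 2 μ) :
    ∫ x, f x ^ 2 ∂μ ≤ ∫ x, g x ^ 2 ∂μ := by
  have hsq : ∀ u : Ω → ℝ, AEStronglyMeasurable u μ → lpNorm u 2 μ ^ 2 = ∫ x, u x ^ 2 ∂μ := by
    intro u hu
    have hnonneg : 0 ≤ ∫ x, u x ^ 2 ∂μ := integral_nonneg fun x => sq_nonneg (u x)
    rw [lpNorm_eq_integral_norm_rpow_toReal two_ne_zero ENNReal.ofNat_ne_top hu]
    simp only [ENNReal.toReal_ofNat, Real.rpow_ofNat, Real.norm_eq_abs, sq_abs]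
    rw [← one_div, ← Real.sqrt_eq_rpow, Real.sq_sqrt hnonneg]
  rw [← hsq f hf, ← hsq g hg.1, ← toReal_eLpNorm hf, ← toReal_eLpNorm hg.1]
  gcongr
  exact hg.eLpNorm_ne_top

end ConditionalExpectation

section ConcaveOn

variable {a b : ℝ} {F : ℝ → ℝ}

theorem concaveOn_dist_of_mem_lowerBounds {s : Set ℝ} {a : ℝ} (hs : Convex ℝ s)
    (ha : a ∈ lowerBounds s) : ConcaveOn ℝ s (fun x => dist x a) := by
  refine ((concaveOn_id hs).add_const (-a)).congr fun x hx => ?_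
  rw [Real.dist_eq, abs_of_nonneg (sub_nonneg.2 (ha hx)), sub_eq_add_neg]
  rfl

theorem concaveOn_dist_of_mem_upperBounds {s : Set ℝ} {b : ℝ} (hs : Convex ℝ s)
    (hb : b ∈ upperBounds s) : ConcaveOn ℝ s (fun x => dist x b) := by
  refine ((convexOn_id hs).neg.add_const b).congr fun x hx => ?_
  rw [Real.dist_eq, abs_of_nonpos (sub_nonpos.2 (hb hx)), neg_sub, sub_eq_neg_add]
  rfl

theorem monotoneOn_of_concaveOn_of_isMaxOn (hF : ConcaveOn ℝ (Icc a b) F)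
    (hmax : IsMaxOn F (Icc a b) b) : MonotoneOn F (Icc a b) := by
  intro x hx y hy hxy
  have h := hF.min_le_of_mem_Icc hx (right_mem_Icc.2 (hx.1.trans hx.2)) ⟨hxy, hy.2⟩
  rwa [min_eq_left (hmax hx)] at h

theorem antitoneOn_of_concaveOn_of_isMaxOn (hF : ConcaveOn ℝ (Icc a b) F)
    (hmax : IsMaxOn F (Icc a b) a) : AntitoneOn F (Icc a b) := by
  intro x hx y hy hxy
  have h := hF.min_le_of_mem_Icc (left_mem_Icc.2 (hx.1.trans hx.2)) hy ⟨hx.1, hxy⟩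
  rwa [min_eq_right (hmax hy)] at h

theorem intervalIntegrable_deriv_of_concaveOn (hab : a ≤ b) (hF : ConcaveOn ℝ (Icc a b) F)
    (hFc : ContinuousOn F (Icc a b)) : IntervalIntegrable (deriv F) volume a b := by
  obtain ⟨m, hm, hmax⟩ := isCompact_Icc.exists_isMaxOn (nonempty_Icc.2 hab) hFc
  have hleft : MonotoneOn F (uIcc a m) := by
    rw [uIcc_of_le hm.1]
    have hsub : Icc a m ⊆ Icc a b := Icc_subset_Icc_right hm.2
    exact monotoneOn_of_concaveOn_of_isMaxOn (hF.subset hsub (convex_Icc a m))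
      (hmax.on_subset hsub)
  have hright : MonotoneOn (-F) (uIcc m b) := by
    rw [uIcc_of_le hm.2]
    have hsub : Icc m b ⊆ Icc a b := Icc_subset_Icc_left hm.1
    exact (antitoneOn_of_concaveOn_of_isMaxOn (hF.subset hsub (convex_Icc m b))
      (hmax.on_subset hsub)).neg
  refine hleft.intervalIntegrable_deriv.trans ?_
  simpa only [neg_neg, Pi.neg_def, deriv.fun_neg'] using hright.intervalIntegrable_deriv.neg

theorem absolutelyContinuousOnInterval_congr {X : Type*} [PseudoMetricSpace X] {f g : ℝ → X}
    (hf : AbsolutelyContinuousOnInterval f a b) (hfg : EqOn f g (uIcc a b)) :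
    AbsolutelyContinuousOnInterval g a b := by
  refine Filter.Tendsto.congr' ?_ hf
  filter_upwards [Filter.mem_inf_of_right (Filter.mem_principal_self _)] with E hE
  refine Finset.sum_congr rfl fun i hi => ?_
  rw [hfg (hE.1 i hi).1, hfg (hE.1 i hi).2]

theorem absolutelyContinuousOnInterval_of_concaveOn (hab : a < b) (hF : ConcaveOn ℝ (Icc a b) F)
    (hFc : ContinuousOn F (Icc a b)) : AbsolutelyContinuousOnInterval F a b := by
  have hint := intervalIntegrable_deriv_of_concaveOn hab.le hF hFc
  obtain ⟨m, hm⟩ := nonempty_Ioo.2 hab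
  have hm' : m ∈ uIcc a b := uIcc_of_le hab.le ▸ Ioo_subset_Icc_self hm
  have hprim := hint.absolutelyContinuousOnInterval_intervalIntegral hm'
  have hlip : LocallyLipschitzOn (Ioo a b) F :=
    (hF.subset Ioo_subset_Icc_self (convex_Ioo a b)).locallyLipschitzOn isOpen_Ioo
  have hftc : EqOn (fun x => F m + ∫ t in m..x, deriv F t) F (Ioo a b) := by
    intro x hx
    have hlip' := hlip.mono (ordConnected_Ioo.uIcc_subset hm hx)
    obtain ⟨K, hK⟩ := hlip'.exists_lipschitzOnWith_of_compact isCompact_uIcc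
    simp only [hK.absolutelyContinuousOnInterval.integral_deriv_eq_sub, add_sub_cancel]
  have hconst : AbsolutelyContinuousOnInterval (fun _ => F m) a b :=
    (LipschitzWith.const (F m)).lipschitzOnWith.absolutelyContinuousOnInterval
  refine absolutelyContinuousOnInterval_congr (hconst.fun_add hprim) ?_
  rw [uIcc_of_le hab.le]
  refine hftc.of_subset_closure ?_ hFc Ioo_subset_Icc_self (closure_Ioo hab.ne).ge
  simpa only [uIcc_of_le hab.le] using (hconst.fun_add hprim).continuousOn

theorem le_deriv_of_concaveOn_of_isMaxOn_sub_mul {s : Set ℝ} {l x τ : ℝ} (hF : ConcaveOn ℝ s F)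
    (hmax : IsMaxOn (fun y => F y - l * y) s x) (hx : x ∈ s) (hτ : τ ∈ s) (hτx : τ < x)
    (hd : DifferentiableAt ℝ F τ) : l ≤ deriv F τ := by
  refine le_trans ?_ (hF.slope_le_deriv hτ hx hτx hd)
  have h : F τ - l * τ ≤ F x - l * x := hmax hτ
  rw [slope_def_field, le_div_iff₀ (sub_pos.2 hτx)]
  linarith

theorem deriv_le_of_concaveOn_of_isMaxOn_sub_mul {s : Set ℝ} {l x τ : ℝ} (hF : ConcaveOn ℝ s F)
    (hmax : IsMaxOn (fun y => F y - l * y) s x) (hx : x ∈ s) (hτ : τ ∈ s) (hxτ : x < τ)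
    (hd : DifferentiableAt ℝ F τ) : deriv F τ ≤ l := by
  refine (hF.deriv_le_slope hx hτ hxτ hd).trans ?_
  have h : F τ - l * τ ≤ F x - l * x := hmax hτ
  rw [slope_def_field, div_le_iff₀ (sub_pos.2 hxτ)]
  linarith

theorem deriv_preimage_Ioi_ae_eq_Iic_sSup {c : ℝ} {S : Set ℝ} (hF : ConcaveOn ℝ (Icc a b) F)
    (hd : ∀ᵐ τ, τ ∈ Icc a b → DifferentiableAt ℝ F τ) (hS : S ⊆ Icc a b)
    (hSmax : ∀ y ∈ S, ∃ l > c, IsMaxOn (fun z => F z - l * z) (Icc a b) y)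
    (hmax : ∀ l > c, ∃ y ∈ S, IsMaxOn (fun z => F z - l * z) (Icc a b) y) :
    deriv F ⁻¹' Ioi c =ᵐ[volume.restrict (Icc a b)] Iic (sSup S) := by
  obtain ⟨y₀, hy₀, -⟩ := hmax (c + 1) (lt_add_one c)
  have hbdd : BddAbove S := bddAbove_Icc.mono hS
  refine Filter.eventuallyEq_set.2 ((ae_restrict_iff' measurableSet_Icc).2 ?_)
  filter_upwards [hd, compl_mem_ae_iff.2 (measure_singleton (sSup S))] with τ hdτ hne hτ
  refine ⟨fun hcτ => ?_, fun hτS => ?_⟩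
  · obtain ⟨l, hcl, hlτ⟩ := exists_between (show c < deriv F τ from hcτ)
    obtain ⟨y, hy, hymax⟩ := hmax l hcl
    refine le_trans (not_lt.1 fun hyτ => hlτ.not_ge ?_) (le_csSup hbdd hy)
    exact deriv_le_of_concaveOn_of_isMaxOn_sub_mul hF hymax (hS hy) hτ hyτ (hdτ hτ)
  · obtain ⟨y, hy, hτy⟩ := exists_lt_of_lt_csSup ⟨y₀, hy₀⟩ (lt_of_le_of_ne hτS hne)
    obtain ⟨l, hcl, hymax⟩ := hSmax y hy
    exact hcl.trans_le (le_deriv_of_concaveOn_of_isMaxOn_sub_mul hF hymax (hS hy) hτ hτy (hdτ hτ))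

theorem concaveOn_Icc_of_exists_supergradient
    (h : ∀ z ∈ Ioo a b, ∃ l, ∀ x ∈ Icc a b, F x ≤ F z + l * (x - z)) :
    ConcaveOn ℝ (Icc a b) F := by
  refine LinearOrder.concaveOn_of_lt (convex_Icc a b) fun x hx y hy hxy α β hα hβ hαβ => ?_
  simp only [smul_eq_mul]
  set z := α * x + β * y with hz
  have hxzy : z ∈ Ioo x y := openSegment_eq_Ioo hxy ▸ ⟨α, β, hα, hβ, hαβ, rfl⟩
  obtain ⟨l, hl⟩ := h z ⟨hx.1.trans_lt hxzy.1, hxzy.2.trans_le hy.2⟩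
  calc α * F x + β * F y ≤ α * (F z + l * (x - z)) + β * (F z + l * (y - z)) := by
        gcongr
        exacts [hl x hx, hl y hy]
    _ = (α + β) * F z + l * (α * x + β * y - (α + β) * z) := by ring
    _ = F z := by rw [hαβ, ← hz]; ring

end ConcaveOn

section IntervalIntegral

variable {E : Type*} [NormedAddCommGroup E] [NormedSpace ℝ E] {a b : ℝ}

theorem continuousOn_of_eq_add_integral {G g : ℝ → E} (hab : a ≤ b)
    (hg : IntegrableOn g (Icc a b)) (hG : ∀ t ∈ Icc a b, G t = G a + ∫ τ in a..t, g τ) :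
    ContinuousOn G (Icc a b) := by
  rw [← uIcc_of_le hab] at hg hG ⊢
  exact (continuousOn_const.add (continuousOn_primitive_interval hg)).congr hG

theorem setIntegral_Iic_restrict_Icc {x : ℝ} (hx : x ∈ Icc a b) (k : ℝ → E) :
    ∫ τ in Iic x, k τ ∂volume.restrict (Icc a b) = ∫ τ in a..x, k τ := by
  have hinter : Iic x ∩ Icc a b = Icc a x := by
    rw [← Ici_inter_Iic, inter_left_comm, Iic_inter_Iic, inf_of_le_left hx.2, Ici_inter_Iic]
  rw [Measure.restrict_restrict measurableSet_Iic, hinter, integral_Icc_eq_integral_Ioc,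
    integral_of_le hx.1]

end IntervalIntegral

theorem exists_le_add_mul_dist_of_bddAbove {X : Type*} [PseudoMetricSpace X] {s : Set X}
    {G : X → ℝ} {p : X} {b : ℝ} (hG : ContinuousWithinAt G s p) (hbdd : BddAbove (G '' s))
    (hb : G p < b) : ∃ C, 0 ≤ C ∧ ∀ x ∈ s, G x ≤ b + C * dist x p := by
  obtain ⟨M, hM⟩ := hbdd
  obtain ⟨δ, hδ, hball⟩ := Metric.mem_nhdsWithin_iff.1 (hG.eventually_lt_const hb)
  have hC : 0 ≤ |M - b| / δ := by positivity
  refine ⟨|M - b| / δ, hC, fun x hx => ?_⟩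
  rcases lt_or_ge (dist x p) δ with hlt | hge
  · exact (hball ⟨hlt, hx⟩).le.trans (le_add_of_nonneg_right (by positivity))
  · calc G x ≤ b + |M - b| := by linarith [hM (mem_image_of_mem G hx), le_abs_self (M - b)]
      _ = b + |M - b| / δ * δ := by rw [div_mul_cancel₀ _ hδ.ne']
      _ ≤ b + |M - b| / δ * dist x p := by gcongr

/-- `F` is the least concave majorant of `G` on `s`: it lies below every concave majorant at each
point of `s`, and its values off `s` are unconstrained. -/
structure IsLeastConcaveMajorantOn {E : Type*} [AddCommMonoid E] [Module ℝ E] (s : Set E)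
    (G F : E → ℝ) : Prop where
  concaveOn : ConcaveOn ℝ s F
  le : ∀ x ∈ s, G x ≤ F x
  le_of_concaveOn : ∀ H : E → ℝ, ConcaveOn ℝ s H → (∀ x ∈ s, G x ≤ H x) → ∀ x ∈ s, F x ≤ H x

namespace IsLeastConcaveMajorantOn

section Module

variable {E : Type*} [AddCommMonoid E] [Module ℝ E] {s : Set E} {G F : E → ℝ}

theorem exists_apply_eq_isMaxOn_sub [TopologicalSpace E] (h : IsLeastConcaveMajorantOn s G F)
    (hs : IsCompact s) (hne : s.Nonempty) (hG : ContinuousOn G s) {φ : E → ℝ}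
    (hφ : ConcaveOn ℝ s φ) (hφc : ContinuousOn φ s) :
    ∃ x ∈ s, F x = G x ∧ IsMaxOn (fun y => F y - φ y) s x := by
  obtain ⟨x, hx, hmax⟩ := hs.exists_isMaxOn hne (hG.sub hφc)
  have hFle : ∀ y ∈ s, F y ≤ φ y + (G x - φ x) :=
    h.le_of_concaveOn _ (hφ.add_const _) fun y hy => by
      have : G y - φ y ≤ G x - φ x := hmax hy
      linarith
  have heq : F x = G x := (h.le x hx).antisymm' (by linarith [hFle x hx])
  refine ⟨x, hx, heq, fun y hy => ?_⟩
  have := hFle y hy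
  change F y - φ y ≤ F x - φ x
  rw [heq]
  linarith

variable [PseudoMetricSpace E] {p : E}

-- `hp` holds at an end point `p` of an interval `s`, where `dist · p` is affine.
theorem exists_le_add_mul_dist (h : IsLeastConcaveMajorantOn s G F)
    (hp : ConcaveOn ℝ s (fun x => dist x p)) (hG : ContinuousWithinAt G s p)
    (hbdd : BddAbove (G '' s)) {b : ℝ} (hb : G p < b) :
    ∃ C, ∀ x ∈ s, F x ≤ b + C * dist x p := by
  obtain ⟨C, hC, hle⟩ := exists_le_add_mul_dist_of_bddAbove hG hbdd hb
  refine ⟨C, h.le_of_concaveOn _ ?_ hle⟩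
  exact ((hp.smul hC).add_const b).congr fun x _ => add_comm _ _

theorem apply_eq (h : IsLeastConcaveMajorantOn s G F) (hps : p ∈ s)
    (hp : ConcaveOn ℝ s (fun x => dist x p)) (hG : ContinuousWithinAt G s p)
    (hbdd : BddAbove (G '' s)) : F p = G p := by
  refine le_antisymm (le_of_forall_gt_imp_ge_of_dense fun b hb => ?_) (h.le p hps)
  obtain ⟨C, hC⟩ := h.exists_le_add_mul_dist hp hG hbdd hb
  simpa only [dist_self, mul_zero, add_zero] using hC p hps

theorem continuousWithinAt (h : IsLeastConcaveMajorantOn s G F) (hps : p ∈ s)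
    (hp : ConcaveOn ℝ s (fun x => dist x p)) (hG : ContinuousWithinAt G s p)
    (hbdd : BddAbove (G '' s)) : ContinuousWithinAt F s p := by
  have heq : F p = G p := h.apply_eq hps hp hG hbdd
  refine tendsto_order.2 ⟨fun a ha => ?_, fun a ha => ?_⟩
  · filter_upwards [hG.eventually_const_lt (heq ▸ ha), self_mem_nhdsWithin] with x hx hxs
    exact hx.trans_le (h.le x hxs)
  · obtain ⟨b, hb, hba⟩ := exists_between (heq ▸ ha)
    obtain ⟨C, hC⟩ := h.exists_le_add_mul_dist hp hG hbdd hb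
    have hlim : ContinuousWithinAt (fun x => b + C * dist x p) s p := by fun_prop
    filter_upwards [hlim.eventually_lt_const (by simpa using hba), self_mem_nhdsWithin]
      with x hx hxs
    exact (hC x hxs).trans_lt hx

end Module

section Icc

variable {A B : ℝ} {G F : ℝ → ℝ}

theorem apply_left_eq (h : IsLeastConcaveMajorantOn (Icc A B) G F) (hAB : A ≤ B)
    (hG : ContinuousOn G (Icc A B)) : F A = G A :=
  h.apply_eq (left_mem_Icc.2 hAB)
    (concaveOn_dist_of_mem_lowerBounds (convex_Icc A B) fun _ hx => hx.1)
    (hG A (left_mem_Icc.2 hAB)) (isCompact_Icc.bddAbove_image hG)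

theorem apply_right_eq (h : IsLeastConcaveMajorantOn (Icc A B) G F) (hAB : A ≤ B)
    (hG : ContinuousOn G (Icc A B)) : F B = G B :=
  h.apply_eq (right_mem_Icc.2 hAB)
    (concaveOn_dist_of_mem_upperBounds (convex_Icc A B) fun _ hx => hx.2)
    (hG B (right_mem_Icc.2 hAB)) (isCompact_Icc.bddAbove_image hG)

theorem continuousOn (h : IsLeastConcaveMajorantOn (Icc A B) G F) (hAB : A < B)
    (hG : ContinuousOn G (Icc A B)) : ContinuousOn F (Icc A B) := by
  have hA : A ∈ Icc A B := left_mem_Icc.2 hAB.le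
  have hB : B ∈ Icc A B := right_mem_Icc.2 hAB.le
  have hbdd : BddAbove (G '' Icc A B) := isCompact_Icc.bddAbove_image hG
  refine h.concaveOn.continuousOn_Icc hAB ?_ ?_
  · rw [← continuousWithinAt_Icc_iff_Ici hAB]
    exact h.continuousWithinAt hA
      (concaveOn_dist_of_mem_lowerBounds (convex_Icc A B) fun _ hx => hx.1) (hG A hA) hbdd
  · rw [← continuousWithinAt_Icc_iff_Iic hAB]
    exact h.continuousWithinAt hB
      (concaveOn_dist_of_mem_upperBounds (convex_Icc A B) fun _ hx => hx.2) (hG B hB) hbdd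

theorem exists_deriv_preimage_Ioi_ae_eq_Iic (h : IsLeastConcaveMajorantOn (Icc A B) G F)
    (hAB : A < B) (hG : ContinuousOn G (Icc A B)) (c : ℝ) :
    ∃ x ∈ Icc A B, F x = G x ∧ deriv F ⁻¹' Ioi c =ᵐ[volume.restrict (Icc A B)] Iic x := by
  set S := {y ∈ Icc A B | F y = G y ∧ ∃ l > c, IsMaxOn (fun z => F z - l * z) (Icc A B) y}
  have hcontact : ∀ l > c, ∃ y ∈ S, IsMaxOn (fun z => F z - l * z) (Icc A B) y := fun l hl => by
    obtain ⟨y, hy, heq, hmax⟩ := h.exists_apply_eq_isMaxOn_sub isCompact_Icc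
      (nonempty_Icc.2 hAB.le) hG (φ := fun z => l * z)
      ((LinearMap.mulLeft ℝ l).concaveOn (convex_Icc A B)) (by fun_prop)
    exact ⟨y, ⟨hy, heq, l, hl, hmax⟩, hmax⟩
  have hFc := h.continuousOn hAB hG
  have hclosed : IsClosed {y ∈ Icc A B | F y = G y} :=
    (hFc.prodMk hG).preimage_isClosed_of_isClosed isClosed_Icc isClosed_diagonal
  have hsub : S ⊆ {y ∈ Icc A B | F y = G y} := fun y hy => ⟨hy.1, hy.2.1⟩
  obtain ⟨y, hy, -⟩ := hcontact (c + 1) (lt_add_one c)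
  have hbdd : BddAbove S := bddAbove_Icc.mono fun y hy => hy.1
  obtain ⟨hmem, heq⟩ := closure_minimal hsub hclosed (csSup_mem_closure ⟨y, hy⟩ hbdd)
  refine ⟨sSup S, hmem, heq, ?_⟩
  refine deriv_preimage_Ioi_ae_eq_Iic_sSup h.concaveOn ?_ (fun y hy => hy.1) (fun y hy => hy.2.2)
    hcontact
  simpa only [uIcc_of_le hAB.le] using
    (absolutelyContinuousOnInterval_of_concaveOn hAB h.concaveOn hFc).ae_differentiableAt

theorem deriv_ae_eq_condExp (h : IsLeastConcaveMajorantOn (Icc A B) G F) (hAB : A < B) {g : ℝ → ℝ}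
    (hg : IntegrableOn g (Icc A B)) (hG : ∀ t ∈ Icc A B, G t = G A + ∫ τ in A..t, g τ) :
    deriv F =ᵐ[volume.restrict (Icc A B)]
      (volume.restrict (Icc A B))[g | MeasurableSpace.comap (deriv F) (borel ℝ)] := by
  have hGc := continuousOn_of_eq_add_integral hAB.le hg hG
  have hac := absolutelyContinuousOnInterval_of_concaveOn hAB h.concaveOn (h.continuousOn hAB hGc)
  have hcontact : ∀ x ∈ Icc A B, F x = G x → ∫ τ in A..x, deriv F τ = ∫ τ in A..x, g τ := by
    intro x hx heq
    have hsub : uIcc A x ⊆ uIcc A B := by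
      rw [uIcc_of_le hx.1, uIcc_of_le hAB.le]
      exact Icc_subset_Icc_right hx.2
    rw [(hac.mono hsub).integral_deriv_eq_sub, heq, h.apply_left_eq hAB.le hGc, hG x hx,
      add_sub_cancel_left]
  refine ae_eq_condExp_comap_of_setIntegral_preimage_Ioi_eq (measurable_deriv F)
    ((intervalIntegrable_iff_integrableOn_Icc_of_le hAB.le).1 hac.intervalIntegrable_deriv) hg
    ?_ fun c => ?_
  · rw [integral_Icc_eq_integral_Ioc, integral_Icc_eq_integral_Ioc, ← integral_of_le hAB.le,
      ← integral_of_le hAB.le]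
    exact hcontact B (right_mem_Icc.2 hAB.le) (h.apply_right_eq hAB.le hGc)
  · obtain ⟨x, hx, heq, hae⟩ := h.exists_deriv_preimage_Ioi_ae_eq_Iic hAB hGc c
    rw [setIntegral_congr_set hae, setIntegral_congr_set hae, setIntegral_Iic_restrict_Icc hx,
      setIntegral_Iic_restrict_Icc hx, hcontact x hx heq]

end Icc

end IsLeastConcaveMajorantOn

section Chords

/-- The values at `τ` of the chords of `G` with endpoints in `[A, B]` on either side of `τ`. -/
def chordValues (G : ℝ → ℝ) (A B τ : ℝ) : Set ℝ :=
  {y : ℝ | ∃ s t : ℝ, A ≤ s ∧ s ≤ τ ∧ τ ≤ t ∧ t ≤ B ∧ s < t ∧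
    y = ((t - τ) / (t - s)) * G s + ((τ - s) / (t - s)) * G t}

variable {A B τ : ℝ} {G F : ℝ → ℝ}

theorem self_mem_chordValues (hAB : A < B) (hτ : τ ∈ Icc A B) : G τ ∈ chordValues G A B τ := by
  rcases hτ.2.eq_or_lt with rfl | h
  · refine ⟨A, τ, le_rfl, hτ.1, le_rfl, le_rfl, hAB, ?_⟩
    simp [div_self (sub_pos.2 hAB).ne']
  · refine ⟨τ, B, hτ.1, le_rfl, hτ.2, le_rfl, h, ?_⟩
    simp [div_self (sub_pos.2 h).ne']

theorem le_of_mem_chordValues {H : ℝ → ℝ} {y : ℝ} (hH : ConcaveOn ℝ (Icc A B) H)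
    (hGH : ∀ x ∈ Icc A B, G x ≤ H x) (hy : y ∈ chordValues G A B τ) : y ≤ H τ := by
  obtain ⟨s, t, hs, hsτ, hτt, ht, hst, rfl⟩ := hy
  have hs' : s ∈ Icc A B := ⟨hs, hst.le.trans ht⟩
  have ht' : t ∈ Icc A B := ⟨hs.trans hst.le, ht⟩
  have hne : t - s ≠ 0 := (sub_pos.2 hst).ne'
  have hα : 0 ≤ (t - τ) / (t - s) := div_nonneg (sub_nonneg.2 hτt) (sub_nonneg.2 hst.le)
  have hβ : 0 ≤ (τ - s) / (t - s) := div_nonneg (sub_nonneg.2 hsτ) (sub_nonneg.2 hst.le)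
  have hαβ : (t - τ) / (t - s) + (τ - s) / (t - s) = 1 := by field_simp; ring
  have hτ : (t - τ) / (t - s) * s + (τ - s) / (t - s) * t = τ := by field_simp; ring
  calc (t - τ) / (t - s) * G s + (τ - s) / (t - s) * G t
      ≤ (t - τ) / (t - s) * H s + (τ - s) / (t - s) * H t := by
        gcongr
        exacts [hGH s hs', hGH t ht']
    _ ≤ H ((t - τ) / (t - s) * s + (τ - s) / (t - s) * t) := hH.2 hs' ht' hα hβ hαβ
    _ = H τ := by rw [hτ]

theorem bddAbove_chordValues (hG : BddAbove (G '' Icc A B)) : BddAbove (chordValues G A B τ) := by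
  obtain ⟨M, hM⟩ := hG
  exact ⟨M, fun y hy => le_of_mem_chordValues (concaveOn_const M (convex_Icc A B))
    (fun x hx => hM (mem_image_of_mem G hx)) hy⟩

theorem slope_le_slope_of_chordValues_le {s t v : ℝ} (hv : ∀ y ∈ chordValues G A B τ, y ≤ v)
    (hs : s ∈ Ico A τ) (ht : t ∈ Ioc τ B) : (G t - v) / (t - τ) ≤ (v - G s) / (τ - s) := by
  have hst : 0 < t - s := sub_pos.2 (hs.2.trans ht.1)
  have hle := hv _ ⟨s, t, hs.1, hs.2.le, ht.1.le, ht.2, hs.2.trans ht.1, rfl⟩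
  rw [div_mul_eq_mul_div, div_mul_eq_mul_div, ← add_div, div_le_iff₀ hst] at hle
  rw [div_le_div_iff₀ (sub_pos.2 ht.1) (sub_pos.2 hs.2)]
  linarith

theorem exists_affine_ge_of_chordValues_le {v : ℝ} (hτ : τ ∈ Ioo A B)
    (hv : ∀ y ∈ chordValues G A B τ, y ≤ v) :
    ∃ l, ∀ x ∈ Icc A B, G x ≤ v + l * (x - τ) := by
  obtain ⟨l, hright, hleft⟩ := exists_between_of_forall_le
    (s := (fun t => (G t - v) / (t - τ)) '' Ioc τ B)
    (t := (fun s => (v - G s) / (τ - s)) '' Ico A τ)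
    ((nonempty_Ioc.2 hτ.2).image _) ((nonempty_Ico.2 hτ.1).image _) (by
      rintro _ ⟨t, ht, rfl⟩ _ ⟨s, hs, rfl⟩
      exact slope_le_slope_of_chordValues_le hv hs ht)
  refine ⟨l, fun x hx => ?_⟩
  rcases lt_trichotomy x τ with h | rfl | h
  · have := hleft (mem_image_of_mem _ ⟨hx.1, h⟩)
    rw [le_div_iff₀ (sub_pos.2 h)] at this
    linarith
  · simpa using hv _ (self_mem_chordValues (hτ.1.trans hτ.2) hx)
  · have := hright (mem_image_of_mem _ ⟨h, hx.2⟩)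
    rw [div_le_iff₀ (sub_pos.2 h)] at this
    linarith

theorem isLeastConcaveMajorantOn_of_isLUB_chordValues (hAB : A < B)
    (hF : ∀ τ ∈ Icc A B, IsLUB (chordValues G A B τ) (F τ)) :
    IsLeastConcaveMajorantOn (Icc A B) G F where
  concaveOn := by
    refine concaveOn_Icc_of_exists_supergradient fun z hz => ?_
    obtain ⟨l, hl⟩ := exists_affine_ge_of_chordValues_le hz (hF z (Ioo_subset_Icc_self hz)).1
    have haff : ConcaveOn ℝ (Icc A B) fun x => F z + l * (x - z) := by
      have := ((LinearMap.mulLeft ℝ l).concaveOn (convex_Icc A B)).add_const (F z - l * z)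
      refine this.congr fun x _ => ?_
      change l * x + (F z - l * z) = F z + l * (x - z)
      ring
    exact ⟨l, fun x hx => (hF x hx).2
      fun y hy => le_of_mem_chordValues (H := fun x => F z + l * (x - z)) haff hl hy⟩
  le x hx := (hF x hx).1 (self_mem_chordValues hAB hx)
  le_of_concaveOn H hH hGH x hx := (hF x hx).2 fun y hy => le_of_mem_chordValues hH hGH hy

end Chords

theorem stmt2_general (A B : ℝ) (hAB : A < B) (G g Fhat : ℝ → ℝ)
    (hg : IntegrableOn g (Set.Icc A B))
    (hG : ∀ t ∈ Set.Icc A B, G t = G A + ∫ τ in A..t, g τ)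
    (hFhat : ∀ τ ∈ Set.Icc A B, Fhat τ =
      sSup {y : ℝ | ∃ s t : ℝ, A ≤ s ∧ s ≤ τ ∧ τ ≤ t ∧ t ≤ B ∧ s < t ∧
        y = ((t - τ) / (t - s)) * G s + ((τ - s) / (t - s)) * G t})
    {p : ℝ≥0∞} (hp : 1 ≤ p) :
    eLpNorm (deriv Fhat) p (volume.restrict (Icc A B)) ≤
      eLpNorm g p (volume.restrict (Icc A B)) := by
  have hGc := continuousOn_of_eq_add_integral hAB.le hg hG
  have hlub : ∀ τ ∈ Icc A B, IsLUB (chordValues G A B τ) (Fhat τ) := fun τ hτ => hFhat τ hτ ▸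
    isLUB_csSup ⟨_, self_mem_chordValues hAB hτ⟩
      (bddAbove_chordValues (isCompact_Icc.bddAbove_image hGc))
  have hmajorant := isLeastConcaveMajorantOn_of_isLUB_chordValues hAB hlub
  rw [eLpNorm_congr_ae (hmajorant.deriv_ae_eq_condExp hAB hg hG)]
  exact eLpNorm_condExp_le_eLpNorm g hp

/-- If `G` is absolutely continuous on `[A,B]` (with derivative `g` square-integrable) and
`F̂` is the least concave majorant of `G` (given by the sup of chords), then the Dirichlet
energy of `F̂` is at most that of `G`. -/
theorem stmt2 (A B : ℝ) (hAB : A < B) (G g Fhat : ℝ → ℝ)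
    (hg : IntegrableOn g (Set.Icc A B))
    (hg2 : IntegrableOn (fun τ => g τ ^ 2) (Set.Icc A B))
    (hG : ∀ t ∈ Set.Icc A B, G t = G A + ∫ τ in A..t, g τ)
    (hFhat : ∀ τ ∈ Set.Icc A B, Fhat τ =
      sSup {y : ℝ | ∃ s t : ℝ, A ≤ s ∧ s ≤ τ ∧ τ ≤ t ∧ t ≤ B ∧ s < t ∧
        y = ((t - τ) / (t - s)) * G s + ((τ - s) / (t - s)) * G t}) :
    ∫ τ in Set.Icc A B, (deriv Fhat τ) ^ 2 ≤ ∫ τ in Set.Icc A B, (g τ) ^ 2 := by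
  exact integral_sq_le_integral_sq_of_eLpNorm_two_le (measurable_deriv Fhat).aestronglyMeasurable
    ((memLp_two_iff_integrable_sq hg.aestronglyMeasurable).2 hg2)
    (stmt2_general A B hAB G g Fhat hg hG hFhat one_le_two)
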